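/- arXiv:1610.09221 — 3 statements merged into one kernel-verified Lean document; each statement's English description precedes it below -/
import Mathlib

section
/- Let n ≥ 1 and consider the matching-market instance with buyers I = {1, …, n}, items J = {j_1, …, j_n}, preference sets S_i = {j_i}, and valuations and budgets v_i = b_i = n/(n − i + 1) for every i. Then for every price q ≥ 0, every feasible, individually rational outcome (X, p) that is envy-free with respect to the constant item pricing assigning price q to every item (i.e., p_i = q·|X_i| for all i, and no bundle X' ⊆ J satisfies u_i(X', q·|X'|) > u_i(X_i, p_i)) has revenue Σ_{i∈I} p_i ≤ n. -/
open Finset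

/-- Utility of a buyer with preference set `S`, valuation `v`, budget `b`,
for bundle `Z` at payment `t`: `v·|Z ∩ S| − t` if `t ≤ b`, and `−∞` otherwise. -/
noncomputable def utility {J : Type*} [DecidableEq J] (S : Finset J) (v b : ℝ)
    (Z : Finset J) (t : ℝ) : EReal :=
  if t ≤ b then ((v * ((Z ∩ S).card : ℝ) - t : ℝ) : EReal) else ⊥

/-- Valuation (= budget) of buyer `i` (0-indexed, standing for `i+1 ∈ {1,…,n}`)
in the lower-bound instance: `n / (n − (i+1) + 1) = n / (n − i)`. -/
noncomputable def mval (n : ℕ) (i : Fin n) : ℝ := (n : ℝ) / ((n : ℝ) - (i : ℕ))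

/-- in the instance with `n` buyers, `n` items, `S_i = {j_i}`,
`v_i = b_i = n/(n−i+1)`, every feasible, individually rational outcome that is
envy-free with respect to a constant item price `q` has revenue at most `n`. -/
theorem fixedPrice_revenue_le
    (n : ℕ) (hn : 1 ≤ n) (q : ℝ) (hq : 0 ≤ q)
    (X : Fin n → Finset (Fin n)) (p : Fin n → ℝ)
    (hfeas : ∀ i i', i ≠ i' → Disjoint (X i) (X i'))
    (hp : ∀ i, 0 ≤ p i)
    (hIR : ∀ i, (0 : EReal) ≤ utility {i} (mval n i) (mval n i) (X i) (p i))
    (hprice : ∀ i, p i = q * ((X i).card : ℝ))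
    (hEF : ∀ i (X' : Finset (Fin n)),
      utility {i} (mval n i) (mval n i) X' (q * (X'.card : ℝ)) ≤
        utility {i} (mval n i) (mval n i) (X i) (p i)) :
    ∑ i, p i ≤ (n : ℝ) := by
  have key : ∀ i, 0 < p i → q ≤ mval n i ∧ p i ≤ q := by
    intro i hi
    have h1 := hIR i
    have h2 := hEF i {i}
    unfold utility at h1 h2
    by_cases hb : p i ≤ mval n i
    · rw [if_pos hb] at h1 h2
      have h1' : 0 ≤ mval n i * ((X i ∩ {i}).card : ℝ) - p i := by exact_mod_cast h1
      by_cases hm : i ∈ X i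
      · have hc : X i ∩ {i} = {i} := by
          ext a; simp only [Finset.mem_inter, Finset.mem_singleton]
          exact ⟨fun h => h.2, fun h => ⟨h ▸ hm, h⟩⟩
        have hcard : (1 : ℝ) ≤ ((X i).card : ℝ) := by
          exact_mod_cast Finset.card_pos.mpr ⟨i, hm⟩
        have hqp : q ≤ p i := by rw [hprice i]; nlinarith
        have hqv : q ≤ mval n i := hqp.trans hb
        rw [hc, Finset.inter_self, Finset.card_singleton, Nat.cast_one, mul_one, mul_one,
          if_pos hqv] at h2
        have h2' := EReal.coe_le_coe_iff.mp h2
        exact ⟨hqv, by linarith⟩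
      · have hc : X i ∩ {i} = ∅ := by
          ext a; simp only [Finset.mem_inter, Finset.mem_singleton, Finset.notMem_empty, iff_false]
          rintro ⟨h, rfl⟩; exact hm h
        rw [hc] at h1'
        simp at h1'
        linarith
    · rw [if_neg hb] at h1
      simp at h1
  by_cases hS : (Finset.univ.filter (fun i => 0 < p i)).Nonempty
  · set S := Finset.univ.filter (fun i => 0 < p i) with hSdef
    have hmem := S.min'_mem hS
    set k := S.min' hS with hk
    have hkq := (key k (Finset.mem_filter.mp hmem).2).1
    have hsum : ∑ i, p i ≤ ∑ i ∈ Finset.Ici k, q := by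
      have h1 : ∑ i ∈ Finset.Ici k, p i = ∑ i, p i := by
        apply Finset.sum_subset (Finset.subset_univ _)
        intro i _ hi
        by_contra hne
        have hpos : 0 < p i := lt_of_le_of_ne (hp i) (Ne.symm hne)
        exact hi (Finset.mem_Ici.mpr (S.min'_le i (Finset.mem_filter.mpr ⟨Finset.mem_univ _, hpos⟩)))
      rw [← h1]
      apply Finset.sum_le_sum
      intro i _
      rcases (hp i).eq_or_lt with h | h
      · rw [← h]; exact hq
      · exact (key i h).2
    rw [Finset.sum_const, Fin.card_Ici, nsmul_eq_mul, Nat.cast_sub k.2.le] at hsum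
    have hpos : (0 : ℝ) < (n : ℝ) - (k : ℕ) := by
      have : ((k : ℕ) : ℝ) < n := by exact_mod_cast k.2
      linarith
    unfold mval at hkq
    rw [le_div_iff₀ hpos] at hkq
    linarith
  · have h0 : ∀ i, p i ≤ 0 := by
      intro i
      by_contra h
      exact hS ⟨i, Finset.mem_filter.mpr ⟨Finset.mem_univ _, not_le.mp h⟩⟩
    exact (Finset.sum_nonpos fun i _ => h0 i).trans (Nat.cast_nonneg n)
end

section
/- Let I and J be finite sets, E ⊆ I × J, and c : I → ℕ, and let M be a maximum B-matching with respect to (E, c). If j ∈ J is an item not covered by M and there exists an M-augmenting path from a buyer i ∈ I to j, then buyer i is incident to exactly c(i) edges of M (i.e., i is saturated: |{j' ∈ J : (i, j') ∈ M}| = c(i)). -/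
open Finset

/-- `M` is a B-matching with respect to edges `E` and capacities `c`:
`M ⊆ E`, every buyer `i` is incident to at most `c i` edges of `M`, and every
item is incident to at most one edge of `M`. -/
def IsBMatching {I J : Type*} [DecidableEq I] [DecidableEq J]
    (E M : Finset (I × J)) (c : I → ℕ) : Prop :=
  M ⊆ E ∧ (∀ i : I, (M.filter (fun e => e.1 = i)).card ≤ c i) ∧
    (∀ j : J, (M.filter (fun e => e.2 = j)).card ≤ 1)

/-- An `M`-augmenting path from buyer `i` to item `j`: a sequence
`y_0, z_0, …, y_h, z_h` of pairwise-distinct buyers and pairwise-distinct items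
with `y_0 = i`, `z_h = j`, `(y_k, z_k) ∈ E \ M` for all `k`, and
`(z_k, y_{k+1}) ∈ M` for all `k < h`. -/
def IsAugPath {I J : Type*} (E M : Finset (I × J)) (i : I) (j : J) : Prop :=
  ∃ (h : ℕ) (y : Fin (h + 1) → I) (z : Fin (h + 1) → J),
    Function.Injective y ∧ Function.Injective z ∧
    y 0 = i ∧ z (Fin.last h) = j ∧
    (∀ k, (y k, z k) ∈ E ∧ (y k, z k) ∉ M) ∧
    (∀ k : Fin h, (y k.succ, z k.castSucc) ∈ M)

theorem swap_card_fst {I J : Type*} [DecidableEq I] [DecidableEq J]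
    (M : Finset (I × J)) (y : I) (z w : J) (hz : (y, z) ∈ M) (hw : (y, w) ∉ M) (i : I) :
    ((insert (y, w) (M.erase (y, z))).filter (fun e => e.1 = i)).card
      = (M.filter (fun e => e.1 = i)).card := by
  rw [Finset.filter_insert, Finset.filter_erase]
  by_cases h : y = i
  · have hm : (y, z) ∈ M.filter (fun e => e.1 = i) := Finset.mem_filter.2 ⟨hz, h⟩
    have hn : (y, w) ∉ (M.filter (fun e => e.1 = i)).erase (y, z) := by simp [hw]
    rw [if_pos h, Finset.card_insert_of_notMem hn, Finset.card_erase_add_one hm]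
  · rw [if_neg h, Finset.erase_eq_of_notMem (by simp [h])]

theorem aug_aux {I J : Type*} [DecidableEq I] [DecidableEq J]
    (E : Finset (I × J)) (c : I → ℕ) (i : I) (h : ℕ) :
    ∀ (M : Finset (I × J)) (j : J) (_ : IsBMatching E M c)
      (_ : ∀ M', IsBMatching E M' c → M'.card ≤ M.card)
      (_ : ∀ e ∈ M, e.2 ≠ j)
      (y : Fin (h + 1) → I) (z : Fin (h + 1) → J) (_ : Function.Injective y)
      (_ : Function.Injective z) (_ : y 0 = i) (_ : z (Fin.last h) = j)
      (_ : ∀ k, (y k, z k) ∈ E ∧ (y k, z k) ∉ M)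
      (_ : ∀ k : Fin h, (y k.succ, z k.castSucc) ∈ M),
      (M.filter (fun e => e.1 = i)).card = c i := by
  induction h with
  | zero =>
    intro M j hM hmax hun y z _ _ hy0 hzl hE _
    obtain ⟨hsub, hI, hJ⟩ := hM
    by_contra hne
    have hlt := lt_of_le_of_ne (hI i) hne
    have h0 := hE 0
    have hz0 : z 0 = j := hzl
    rw [hy0, hz0] at h0
    have := hmax (insert (i, j) M) ⟨?_, ?_, ?_⟩
    · rw [Finset.card_insert_of_notMem h0.2] at this
      omega
    · exact Finset.insert_subset h0.1 hsub
    · intro i'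
      rw [Finset.filter_insert]
      split_ifs with hh
      · have hh' : i = i' := hh
        subst hh'
        exact (Finset.card_insert_le _ _).trans hlt
      · exact hI i'
    · intro j'
      rw [Finset.filter_insert]
      split_ifs with hh
      · have hh' : j = j' := hh
        subst hh'
        rw [Finset.filter_eq_empty_iff.2 (fun e he => hun e he)]
        simp
      · exact hJ j'
  | succ h ih =>
    intro M j hM hmax hun y z hy hz hy0 hzl hE hMp
    obtain ⟨hsub, hI, hJ⟩ := hM
    have ha := hMp (Fin.last h)
    have hb := hE (Fin.last (h + 1))
    rw [Fin.succ_last] at ha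
    rw [hzl] at hb
    set Y := y (Fin.last (h + 1)) with hY
    set Z := z (Fin.last h).castSucc with hZ
    have hcard := swap_card_fst M Y Z j ha hb.2
    have hc : (insert (Y, j) (M.erase (Y, Z))).card = M.card := by
      rw [Finset.card_insert_of_notMem (by simp [hb.2]), Finset.card_erase_add_one ha]
    have hyne : ∀ k : Fin (h + 1), y k.castSucc ≠ Y := fun k hk =>
      (Fin.castSucc_lt_last k).ne (hy hk)
    have hZj : Z ≠ j := hun _ ha
    rw [← hcard i]
    refine ih (insert (Y, j) (M.erase (Y, Z))) Z ⟨?_, ?_, ?_⟩ ?_ ?_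
      (fun k => y k.castSucc) (fun k => z k.castSucc)
      (hy.comp (Fin.castSucc_injective _)) (hz.comp (Fin.castSucc_injective _)) hy0 rfl ?_ ?_
    · exact Finset.insert_subset hb.1 ((Finset.erase_subset _ _).trans hsub)
    · intro i'
      rw [hcard]
      exact hI i'
    · intro j'
      rw [Finset.filter_insert, Finset.filter_erase]
      split_ifs with hh
      · have hh' : j = j' := hh
        subst hh'
        rw [Finset.filter_eq_empty_iff.2 (fun e he => hun e he)]
        simp
      · exact (Finset.card_erase_le).trans (hJ j')
    · intro M' hM'
      rw [hc]
      exact hmax M' hM'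
    · intro e he heZ
      rcases Finset.mem_insert.1 he with rfl | he
      · exact hZj heZ.symm
      · obtain ⟨hne, heM⟩ := Finset.mem_erase.1 he
        exact hne (Finset.card_le_one.1 (hJ Z) e (by simp [heM, heZ]) (Y, Z) (by simp [ha]))
    · intro k
      refine ⟨(hE _).1, ?_⟩
      have := (hE k.castSucc).2
      have h2 := hyne k
      simp [this, h2]
    · intro k
      have h1 := hMp k.castSucc
      have h2 := hyne k.succ
      rw [← Fin.succ_castSucc] at h2
      simp [h1, h2]

/-- if `M` is a maximum B-matching, `j` is an item not covered by
`M`, and there is an `M`-augmenting path from buyer `i` to `j`, then `i` is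
saturated: it is incident to exactly `c i` edges of `M`. -/
theorem augPath_to_uncovered_saturated
    {I J : Type*} [Fintype I] [Fintype J] [DecidableEq I] [DecidableEq J]
    (E M : Finset (I × J)) (c : I → ℕ)
    (hM : IsBMatching E M c)
    (hmax : ∀ M', IsBMatching E M' c → M'.card ≤ M.card)
    (j : J) (huncov : ∀ e ∈ M, e.2 ≠ j)
    (i : I) (hpath : IsAugPath E M i j) :
    (M.filter (fun e => e.1 = i)).card = c i := by
  obtain ⟨h, y, z, hy, hz, h0, hl, hE, hp⟩ := hpath
  exact aug_aux E c i h M j hM hmax huncov y z hy hz h0 hl hE hp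
end

section
/- Let I and J be finite sets, E ⊆ I × J, and let c, c' : I → ℕ be capacity functions with c(i) ≤ c'(i) + 1 for every i ∈ I. Suppose there exists a B-matching with respect to (E, c) covering every item of J, and let M be a maximum B-matching with respect to (E, c'). Let U ⊆ J be the set of items not covered by M, and let N(U) ⊆ I be the set of buyers i such that there exists an M-augmenting path from i to some item of U. Then |U| ≤ |N(U)|. -/
open Finset
open scoped Classical

theorem augPath_suffix {I J : Type*} (E M : Finset (I × J)) (j : J) :
    ∀ (h : ℕ) (y : Fin (h + 1) → I) (z : Fin (h + 1) → J),
    Function.Injective y → Function.Injective z → z (Fin.last h) = j →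
    (∀ k, (y k, z k) ∈ E ∧ (y k, z k) ∉ M) →
    (∀ k : Fin h, (y k.succ, z k.castSucc) ∈ M) →
    ∀ k, IsAugPath E M (y k) j := by
  intro h
  induction h with
  | zero =>
    intro y z hy hz hl he hm k
    exact ⟨0, y, z, hy, hz, by congr 1; exact (Fin.fin_one_eq_zero k).symm, hl, he, hm⟩
  | succ h ih =>
    intro y z hy hz hl he hm k
    refine Fin.cases ?_ (fun k' => ?_) k
    · exact ⟨h + 1, y, z, hy, hz, rfl, hl, he, hm⟩
    · exact ih (fun k => y k.succ) (fun k => z k.succ)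
        (hy.comp (Fin.succ_injective _)) (hz.comp (Fin.succ_injective _))
        (by simpa using hl) (fun k => he k.succ) (fun k => hm k.succ) k'

theorem augPath_cons {I J : Type*} (E M : Finset (I × J)) (i n : I) (t j : J)
    (hfun : ∀ a b t, (a, t) ∈ M → (b, t) ∈ M → a = b)
    (hj : ∀ e ∈ M, e.2 ≠ j) (hp : IsAugPath E M n j)
    (hn : (n, t) ∈ M) (hi : (i, t) ∈ E) (hi' : (i, t) ∉ M) : IsAugPath E M i j := by
  obtain ⟨h, y, z, hy, hz, h0, hl, he, hm⟩ := hp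
  by_cases hr : i ∈ Set.range y
  · obtain ⟨k, rfl⟩ := hr
    exact augPath_suffix E M j h y z hy hz hl he hm k
  have ht : t ∉ Set.range z := by
    rintro ⟨k, rfl⟩
    refine Fin.lastCases (fun hn => ?_) (fun k hn => ?_) k hn
    · exact hj _ hn hl
    · have h1 := hfun _ _ _ hn (hm k)
      rw [← h0] at h1
      exact Fin.succ_ne_zero k (hy h1).symm
  refine ⟨h + 1, Fin.cons i y, Fin.cons t z, Fin.cons_injective_iff.2 ⟨hr, hy⟩,
    Fin.cons_injective_iff.2 ⟨ht, hz⟩, rfl, ?_, ?_, ?_⟩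
  · rw [← Fin.succ_last, Fin.cons_succ, hl]
  · intro k
    refine Fin.cases ?_ (fun k => ?_) k
    · simpa using ⟨hi, hi'⟩
    · simpa using he k
  · intro k
    refine Fin.cases ?_ (fun k => ?_) k
    · simpa [h0] using hn
    · simpa [← Fin.succ_castSucc] using hm k

theorem bmatching_fun {I J : Type*} [DecidableEq I] [DecidableEq J]
    {E M : Finset (I × J)} {c : I → ℕ} (hM : IsBMatching E M c) :
    ∀ a b t, (a, t) ∈ M → (b, t) ∈ M → a = b := by
  intro a b t ha hb
  have := Finset.card_le_one.1 (hM.2.2 t) (a, t) (by simp [ha]) (b, t) (by simp [hb])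
  exact congrArg Prod.fst this

theorem exists_larger {I J : Type*} [DecidableEq I] [DecidableEq J]
    (E : Finset (I × J)) (c : I → ℕ) :
    ∀ (h : ℕ) (M : Finset (I × J)) (y : Fin (h + 1) → I) (z : Fin (h + 1) → J),
    IsBMatching E M c → (M.filter (fun e => e.1 = y 0)).card < c (y 0) →
    (∀ e ∈ M, e.2 ≠ z (Fin.last h)) →
    Function.Injective z →
    (∀ k, (y k, z k) ∈ E ∧ (y k, z k) ∉ M) →
    (∀ k : Fin h, (y k.succ, z k.castSucc) ∈ M) →
    ∃ M', IsBMatching E M' c ∧ M.card < M'.card := by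
  intro h
  induction h with
  | zero =>
    intro M y z hM hc hu hz he hm
    refine ⟨insert (y 0, z 0) M, ⟨?_, ?_, ?_⟩, ?_⟩
    · exact Finset.insert_subset (he 0).1 hM.1
    · intro i
      rw [Finset.filter_insert]
      split_ifs with hi
      · simp only at hi
        subst hi
        exact (Finset.card_insert_le _ _).trans hc
      · exact hM.2.1 i
    · intro j
      rw [Finset.filter_insert]
      split_ifs with hi
      · simp only at hi
        subst hi
        have hem : M.filter (fun e => e.2 = z 0) = ∅ :=
          Finset.filter_eq_empty_iff.2 (fun e h => hu e h)
        rw [hem]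
        simp
      · exact hM.2.2 j
    · rw [Finset.card_insert_of_notMem (he 0).2]; omega
  | succ h ih =>
    intro M y z hM hc hu hz he hm
    have h10 : (y 1, z 0) ∈ M := hm 0
    have h00 := he 0
    have hne : y 0 ≠ y 1 := fun h => h00.2 (h ▸ h10)
    have hnm : (y 0, z 0) ∉ M.erase (y 1, z 0) := fun h => h00.2 (Finset.mem_of_mem_erase h)
    have hpos := Finset.card_pos.2 ⟨_, h10⟩
    have hcard : (insert (y 0, z 0) (M.erase (y 1, z 0))).card = M.card := by
      rw [Finset.card_insert_of_notMem hnm, Finset.card_erase_of_mem h10]; omega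
    have hz0 : ∀ k : Fin (h + 1), z k.succ ≠ z 0 := fun k hk => Fin.succ_ne_zero k (hz hk)
    have key := ih (insert (y 0, z 0) (M.erase (y 1, z 0))) (fun k => y k.succ)
      (fun k => z k.succ) ?_ ?_ ?_ (hz.comp (Fin.succ_injective _)) ?_ ?_
    · rwa [hcard] at key
    · refine ⟨?_, ?_, ?_⟩
      · exact Finset.insert_subset h00.1 ((Finset.erase_subset _ _).trans hM.1)
      · intro i
        rw [Finset.filter_insert]
        have hle : ((M.erase (y 1, z 0)).filter (fun e => e.1 = i)).card
          ≤ (M.filter (fun e => e.1 = i)).card :=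
          Finset.card_le_card (Finset.filter_subset_filter _ (Finset.erase_subset _ _))
        split_ifs with hi
        · simp only at hi
          subst hi
          exact (Finset.card_insert_le _ _).trans (by omega)
        · exact hle.trans (hM.2.1 i)
      · intro j
        rw [Finset.card_le_one]
        rintro ⟨a, t⟩ ha ⟨b, s⟩ hb
        have hf := bmatching_fun hM
        simp only [Finset.mem_filter, Finset.mem_insert, Finset.mem_erase, Prod.mk.injEq, ne_eq] at ha hb ⊢
        grind
    · have hs : ((insert (y 0, z 0) (M.erase (y 1, z 0))).filter (fun e => e.1 = y 1))
        ⊂ M.filter (fun e => e.1 = y 1) := by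
        rw [Finset.ssubset_iff_of_subset]
        · refine ⟨(y 1, z 0), by simp [h10], ?_⟩
          simp [hne.symm]
        · rintro ⟨a, t⟩ ha
          simp only [Finset.mem_filter, Finset.mem_insert, Finset.mem_erase, Prod.mk.injEq, ne_eq] at ha ⊢
          grind
      exact (Finset.card_lt_card hs).trans_le (hM.2.1 (y 1))
    · intro e he'
      rcases Finset.mem_insert.1 he' with rfl | h'
      · exact (hz0 _).symm
      · simpa using hu e (Finset.mem_of_mem_erase h')
    · intro k
      refine ⟨(he k.succ).1, ?_⟩
      have := (he k.succ).2
      have := hz0 k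
      simp only [Finset.mem_insert, Finset.mem_erase, Prod.mk.injEq, ne_eq]
      tauto
    · intro k
      have h1 := hm k.succ
      have h2 := hz0 k.castSucc
      rw [← Fin.succ_castSucc] at h1
      simp only [Finset.mem_insert, Finset.mem_erase, Prod.mk.injEq, ne_eq]
      tauto

/-- if capacities satisfy `c i ≤ c' i + 1`, some B-matching with
capacities `c` covers every item, and `M` is a maximum B-matching with
capacities `c'`, then the set `U` of items uncovered by `M` satisfies
`|U| ≤ |N(U)|`, where `N(U)` is the set of buyers having an `M`-augmenting
path to some item of `U`. -/
theorem uncovered_le_neighbours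
    {I J : Type*} [Fintype I] [Fintype J] [DecidableEq I] [DecidableEq J]
    (E : Finset (I × J)) (c c' : I → ℕ) (hcc : ∀ i, c i ≤ c' i + 1)
    (hfull : ∃ M0, IsBMatching E M0 c ∧ ∀ j : J, ∃ e ∈ M0, e.2 = j)
    (M : Finset (I × J)) (hM : IsBMatching E M c')
    (hmax : ∀ M', IsBMatching E M' c' → M'.card ≤ M.card) :
    (Finset.univ.filter (fun j : J => ∀ e ∈ M, e.2 ≠ j)).card ≤
      (Finset.univ.filter
        (fun i : I => ∃ j : J, (∀ e ∈ M, e.2 ≠ j) ∧ IsAugPath E M i j)).card := by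
  obtain ⟨M0, hM0, hcov⟩ := hfull
  have hfun := bmatching_fun hM
  set U := Finset.univ.filter (fun j : J => ∀ e ∈ M, e.2 ≠ j) with hU
  set N := Finset.univ.filter
        (fun i : I => ∃ j : J, (∀ e ∈ M, e.2 ≠ j) ∧ IsAugPath E M i j) with hN
  have hsat : ∀ i ∈ N, c' i ≤ (M.filter (fun e => e.1 = i)).card := by
    intro i hi
    obtain ⟨j, hj, h, y, z, hy, hz, h0, hl, he, hm⟩ := (Finset.mem_filter.1 hi).2
    by_contra hlt
    push Not at hlt
    obtain ⟨M', h1, h2⟩ := exists_larger E c' h M y z hM (by rw [h0]; exact hlt)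
      (by rw [hl]; exact hj) hz he hm
    exact absurd (hmax M' h1) (by omega)
  set T := (M.filter (fun e => e.1 ∈ N)).image Prod.snd with hT
  have hTc : T.card = (M.filter (fun e => e.1 ∈ N)).card := by
    apply Finset.card_image_of_injOn
    rintro ⟨a, t⟩ ha ⟨b, s⟩ hb hab
    simp only [Finset.coe_filter, Set.mem_ofPred_eq] at ha hb hab
    subst hab
    rw [hfun _ _ _ ha.1 hb.1]
  have hdisj : Disjoint U T := by
    rw [Finset.disjoint_left]
    intro t htU htT
    obtain ⟨e, he, rfl⟩ := Finset.mem_image.1 htT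
    exact (Finset.mem_filter.1 htU).2 e (Finset.mem_filter.1 he).1 rfl
  have hsub : U ∪ T ⊆ (M0.filter (fun e => e.1 ∈ N)).image Prod.snd := by
    intro t ht
    obtain ⟨⟨i, t'⟩, hi, rfl⟩ := hcov t
    refine Finset.mem_image.2 ⟨(i, t'), Finset.mem_filter.2 ⟨hi, ?_⟩, rfl⟩
    have hE := hM0.1 hi
    simp only at ht ⊢
    rcases Finset.mem_union.1 ht with h | h
    · have hu := (Finset.mem_filter.1 h).2
      refine Finset.mem_filter.2 ⟨Finset.mem_univ _, t', hu, 0, fun _ => i, fun _ => t',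
        fun a b _ => Fin.ext (by omega), fun a b _ => Fin.ext (by omega), rfl, rfl,
        fun _ => ⟨hE, fun h => hu _ h rfl⟩, fun k => k.elim0⟩
    · obtain ⟨⟨n, s⟩, hn, hs⟩ := Finset.mem_image.1 h
      simp only at hs
      subst hs
      obtain ⟨hnM, hnN⟩ := Finset.mem_filter.1 hn
      by_cases hiM : (i, s) ∈ M
      · rw [hfun _ _ _ hiM hnM]; exact hnN
      · obtain ⟨j, hj, hp⟩ := (Finset.mem_filter.1 hnN).2
        exact Finset.mem_filter.2 ⟨Finset.mem_univ _, j, hj,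
          augPath_cons E M i n s j hfun hj hp hnM hE hiM⟩
  have hfib : ∀ A : Finset (I × J), (A.filter (fun e => e.1 ∈ N)).card
      = ∑ i ∈ N, (A.filter (fun e => e.1 = i)).card := by
    intro A
    have hmaps : ∀ e ∈ A.filter (fun e => e.1 ∈ N), e.1 ∈ N :=
      fun e he => (Finset.mem_filter.1 he).2
    rw [Finset.card_eq_sum_card_fiberwise (s := A.filter (fun e => e.1 ∈ N))
      (f := Prod.fst) (t := N) hmaps]
    refine Finset.sum_congr rfl fun i hi => ?_
    congr 1
    ext e
    simp only [Finset.mem_filter]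
    grind
  have h1 := (Finset.card_le_card hsub).trans Finset.card_image_le
  rw [Finset.card_union_of_disjoint hdisj, hTc, hfib, hfib] at h1
  have h2 : ∑ i ∈ N, (M0.filter (fun e => e.1 = i)).card
      ≤ ∑ i ∈ N, ((M.filter (fun e => e.1 = i)).card + 1) := by
    refine Finset.sum_le_sum fun i hi => ?_
    have := hM0.2.1 i
    have := hcc i
    have := hsat i hi
    omega
  rw [Finset.sum_add_distrib, Finset.sum_const, smul_eq_mul, mul_one] at h2
  omega
end
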